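/- arXiv:1511.07687 — 2 statements merged into one kernel-verified Lean document; each statement's English description precedes it below -/
import Mathlib

section
/- Uniform differential injectivity for the canonical form (Proposition 4). Let C_x ⊂ R^n be a bounded open set and C_θ ⊂ R^{2n} a bounded open set such that for all θ = (θ_a, θ_b) in Cl(C_θ) the pair (A(θ_a), B(θ_b)) is controllable (Kalman rank condition: the matrix [B(θ_b), A(θ_a)B(θ_b), …, A(θ_a)^{n−1}B(θ_b)] has rank n). Let U_{4n} be a compact subset of R^{4n−1} such that for every v = (v_0, …, v_{4n−2}) ∈ U_{4n} the 2n×2n Hankel matrix 𝔐_{2n−1}(v) is invertible. Then there exists L_𝓗 > 0 such that for all (x,θ), (x*,θ*) ∈ Cl(C_x) × Cl(C_θ) and all v ∈ U_{4n}: |𝓗_{4n−1}(x*,θ*,v) − 𝓗_{4n−1}(x,θ,v)| ≥ L_𝓗 |(x−x*, θ−θ*)|. -/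
open scoped Matrix BigOperators

/-- The Euclidean norm of a vector in `ℝ^m`. -/
noncomputable def eNorm {m : ℕ} (x : Fin m → ℝ) : ℝ := Real.sqrt (∑ i, (x i) ^ 2)

/-- The first basis row vector `e₁ᵀ = (1, 0, …, 0)`. -/
def e1 (n : ℕ) : Fin n → ℝ := fun j => if (j : ℕ) = 0 then 1 else 0

/-- Canonical SISO form : `A(θ_a)` has first column `−θ_a` and entries `(i, i+1)` equal
to `1`, all other entries `0`. -/
def Acan (n : ℕ) (θa : Fin n → ℝ) : Matrix (Fin n) (Fin n) ℝ :=
  fun i j => if (j : ℕ) = 0 then -θa i else if (j : ℕ) = (i : ℕ) + 1 then 1 else 0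

/-- `H_r(θ)` : the `r × n` matrix stacking the rows `C A(θ_a)^{j-1}`, `j = 1,…,r`,
with `C = e₁ᵀ`. -/
def Hcan (n r : ℕ) (θa : Fin n → ℝ) : Matrix (Fin r) (Fin n) ℝ :=
  fun j => Matrix.vecMul (e1 n) (Acan n θa ^ (j : ℕ))

/-- The down-shift matrix `S ∈ ℝ^{r×r}`. -/
def shiftMat (r : ℕ) : Matrix (Fin r) (Fin r) ℝ :=
  fun i j => if (i : ℕ) = (j : ℕ) + 1 then 1 else 0

/-- `𝓗_r(x, θ, v) = H_r(θ) x + Σ_{j=1}^{r−1} S^j H_r(θ) B(θ_b) v_{j−1}` for the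
canonical form (`B(θ_b) = θ_b`). -/
def HHcan (n r : ℕ) (x θa θb : Fin n → ℝ) (v : Fin (r - 1) → ℝ) : Fin r → ℝ :=
  Hcan n r θa *ᵥ x
    + ∑ j : Fin (r - 1), v j • ((shiftMat r ^ ((j : ℕ) + 1)) *ᵥ (Hcan n r θa *ᵥ θb))

/-- The `a × a` Hankel matrix of a vector `v ∈ ℝ^b` : entry `(i,j)` is `v_{i+j}`. -/
def hankelOf (a b : ℕ) (v : Fin b → ℝ) : Matrix (Fin a) (Fin a) ℝ :=
  fun i j => if h : (i : ℕ) + (j : ℕ) < b then v ⟨(i : ℕ) + (j : ℕ), h⟩ else 0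

/-- The Kalman controllability matrix `[B, A B, …, A^{n−1} B]` of the canonical pair. -/
def ctrbMat (n : ℕ) (θa θb : Fin n → ℝ) : Matrix (Fin n) (Fin n) ℝ :=
  fun i j => ((Acan n θa ^ (j : ℕ)) *ᵥ θb) i


open Polynomial in
/-- polynomial attached to a vector -/
noncomputable def PV {n : ℕ} (u : Fin n → ℝ) : Polynomial ℝ :=
  ∑ i : Fin n, C (u i) * X ^ (n - 1 - (i : ℕ))

/-- driven state sequence -/
def stq {n : ℕ} (A : Matrix (Fin n) (Fin n) ℝ) (w : ℕ → Fin n → ℝ) (x : Fin n → ℝ) :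
    ℕ → Fin n → ℝ
  | 0 => x
  | k + 1 => A *ᵥ stq A w x k + w k

def vext {m : ℕ} (v : Fin m → ℝ) (k : ℕ) : ℝ := if h : k < m then v ⟨k, h⟩ else 0

theorem Acan_mulVec {n : ℕ} (hn : 0 < n) (a u : Fin n → ℝ) (i : Fin n) :
    (Acan n a *ᵥ u) i = -a i * u ⟨0, hn⟩ + vext u (i + 1) := by
  obtain ⟨n, rfl⟩ : ∃ m, n = m + 1 := ⟨n - 1, by omega⟩
  simp only [Matrix.mulVec, dotProduct, Acan]
  rw [Fin.sum_univ_succ]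
  simp only [Fin.val_zero, if_true, Fin.val_succ, Nat.succ_ne_zero, if_false]
  congr 1
  unfold vext
  by_cases h : (i : ℕ) + 1 < n + 1
  on_goal 1 => rw [dif_pos h]
  on_goal 2 => rw [dif_neg h]
  · rw [Finset.sum_eq_single (⟨i, by omega⟩ : Fin n)]
    · simp
    · intro b _ hb
      have : (b : ℕ) ≠ i := fun h => hb (Fin.ext h)
      simp [this]
    · simp
  · apply Finset.sum_eq_zero
    intro b _
    have : (b : ℕ) ≠ i := by omega
    simp [this]

theorem stq_closed {n : ℕ} (A : Matrix (Fin n) (Fin n) ℝ) (w : ℕ → Fin n → ℝ) (x : Fin n → ℝ)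
    (k : ℕ) : stq A w x k = (A ^ k) *ᵥ x + ∑ j ∈ Finset.range k, (A ^ (k - 1 - j)) *ᵥ w j := by
  induction k with
  | zero => simp [stq]
  | succ k ih =>
    rw [stq, ih, Finset.sum_range_succ, Matrix.mulVec_add, Matrix.mulVec_mulVec, ← pow_succ',
      Matrix.mulVec_sum, add_assoc]
    congr 2
    · apply Finset.sum_congr rfl
      intro j hj
      have := Finset.mem_range.1 hj
      rw [Matrix.mulVec_mulVec, ← pow_succ']
      congr 2
      omega
    · simp

theorem shift_pow {r : ℕ} (m : ℕ) (u : Fin r → ℝ) (i : Fin r) :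
    ((shiftMat r ^ m) *ᵥ u) i = if m ≤ (i : ℕ) then vext u (i - m) else 0 := by
  induction m generalizing i with
  | zero => simp [vext]
  | succ m ih =>
    rw [pow_succ', ← Matrix.mulVec_mulVec]
    simp only [Matrix.mulVec, dotProduct, shiftMat] at ih ⊢
    simp only [ih]
    split_ifs with h
    · rw [Finset.sum_eq_single (⟨i - 1, by omega⟩ : Fin r)]
      · have h1 : (i : ℕ) = i - 1 + 1 := by omega
        have h2 : m ≤ (i : ℕ) - 1 := by omega
        simp only [← h1, h2, if_true, one_mul]
        congr 1
        omega
      · intro b _ hb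
        have : (i : ℕ) ≠ b + 1 := fun h => hb (Fin.ext (by simp; omega))
        simp [this]
      · simp
    · apply Finset.sum_eq_zero
      intro b _
      by_cases hb : (i : ℕ) = b + 1
      · have : ¬ m ≤ (b : ℕ) := by omega
        simp [this]
      · simp [hb]

theorem e1_dot {n : ℕ} (hn : 0 < n) (u : Fin n → ℝ) : e1 n ⬝ᵥ u = u ⟨0, hn⟩ := by
  unfold dotProduct e1
  rw [Finset.sum_eq_single (⟨0, hn⟩ : Fin n)]
  · simp
  · intro b _ hb
    have : (b : ℕ) ≠ 0 := fun h => hb (Fin.ext h)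
    simp [this]
  · simp

theorem Hcan_apply {n r : ℕ} (hn : 0 < n) (a u : Fin n → ℝ) (i : Fin r) :
    (Hcan n r a *ᵥ u) i = ((Acan n a ^ (i : ℕ)) *ᵥ u) ⟨0, hn⟩ := by
  rw [← e1_dot hn (_ *ᵥ u), Matrix.dotProduct_mulVec]
  rfl

theorem HHcan_apply {n r : ℕ} (hn : 0 < n) (x a b : Fin n → ℝ) (v : Fin (r - 1) → ℝ) (i : Fin r) :
    HHcan n r x a b v i = stq (Acan n a) (fun k => vext v k • b) x i ⟨0, hn⟩ := by
  rw [stq_closed]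
  simp only [HHcan, Pi.add_apply, Finset.sum_apply, Pi.smul_apply, shift_pow, Hcan_apply hn,
    smul_eq_mul]
  congr 1
  have h1 : ∀ j : Fin (r - 1), v j = vext v j := fun j => by simp [vext]
  simp only [h1]
  rw [Fin.sum_univ_eq_sum_range (fun j => vext v j * if j + 1 ≤ (i : ℕ) then
    vext (Hcan n r a *ᵥ b) (i - (j + 1)) else 0) (r - 1)]
  symm
  apply Finset.sum_subset_zero_on_sdiff
  · intro j hj
    have := Finset.mem_range.1 hj
    rw [Finset.mem_range]
    omega
  · intro j hj
    have : ¬ (j + 1 ≤ (i : ℕ)) := by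
      have := Finset.mem_sdiff.1 hj
      simp at this
      omega
    simp [this]
  · intro j hj
    have := Finset.mem_range.1 hj
    have h3 : j + 1 ≤ (i : ℕ) := by omega
    have h4 : (i : ℕ) - (j + 1) < r := by omega
    rw [if_pos h3, vext, vext, dif_pos (by omega), dif_pos h4, Hcan_apply hn]
    rw [Matrix.mulVec_smul]
    simp only [Pi.smul_apply, smul_eq_mul]
    rw [show (i : ℕ) - (j + 1) = i - 1 - j by omega]

/-- telescoping -/
theorem tele {n : ℕ} (hn : 0 < n) (a x : Fin n → ℝ) (w : ℕ → Fin n → ℝ) (m : ℕ) (hm : m ≤ n)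
    (k : ℕ) :
    stq (Acan n a) w x (k + m) ⟨0, hn⟩ = vext (stq (Acan n a) w x k) m +
      ∑ i ∈ Finset.range m, (- vext a i * stq (Acan n a) w x (k + (m - 1 - i)) ⟨0, hn⟩
        + vext (w (k + (m - 1 - i))) i) := by
  induction m generalizing k with
  | zero => simp [vext, hn]
  | succ m ih =>
    have h := ih (by omega) (k + 1)
    rw [show k + (m + 1) = k + 1 + m by ring, h, Finset.sum_range_succ]
    have h1 : vext (stq (Acan n a) w x (k + 1)) m = - vext a m * stq (Acan n a) w x k ⟨0, hn⟩
        + vext (stq (Acan n a) w x k) (m + 1) + vext (w k) m := by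
      have hm' : m < n := by omega
      conv_lhs => rw [vext, dif_pos hm', stq, Pi.add_apply, Acan_mulVec hn]
      simp [vext, hm']
    rw [h1]
    have h2 : ∀ i ∈ Finset.range m, (- vext a i * stq (Acan n a) w x (k + 1 + (m - 1 - i)) ⟨0, hn⟩
        + vext (w (k + 1 + (m - 1 - i))) i) =
        (- vext a i * stq (Acan n a) w x (k + (m + 1 - 1 - i)) ⟨0, hn⟩
        + vext (w (k + (m + 1 - 1 - i))) i) := by
      intro i hi
      have := Finset.mem_range.1 hi
      rw [show k + 1 + (m - 1 - i) = k + (m + 1 - 1 - i) by omega]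
    rw [Finset.sum_congr rfl h2]
    simp
    ring

/-- shift on sequences -/
def shf : Module.End ℝ (ℕ → ℝ) where
  toFun s := fun k => s (k + 1)
  map_add' _ _ := rfl
  map_smul' _ _ := rfl

theorem shf_pow (m : ℕ) (s : ℕ → ℝ) (k : ℕ) : (shf ^ m) s k = s (k + m) := by
  induction m generalizing k with
  | zero => simp
  | succ m ih =>
    rw [pow_succ']
    change (shf ^ m) s (k + 1) = _
    rw [ih]
    congr 1
    ring

open Polynomial in
theorem aeval_shf (p : ℝ[X]) (N : ℕ) (hN : p.natDegree < N) (s : ℕ → ℝ) (k : ℕ) :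
    aeval shf p s k = ∑ i ∈ Finset.range N, p.coeff i * s (k + i) := by
  rw [aeval_eq_sum_range' hN, LinearMap.sum_apply, Finset.sum_apply]
  simp [shf_pow]

open Polynomial in
theorem aeval_PV {n : ℕ} (u : Fin n → ℝ) (s : ℕ → ℝ) (k : ℕ) :
    aeval shf (PV u) s k = ∑ i : Fin n, u i * s (k + (n - 1 - i)) := by
  simp [PV, map_sum, LinearMap.sum_apply, Finset.sum_apply, shf_pow]

open Polynomial in
theorem PV_coeff {n : ℕ} (u : Fin n → ℝ) (i : Fin n) : (PV u).coeff (n - 1 - i) = u i := by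
  simp only [PV, finsetSum_coeff, coeff_C_mul, coeff_X_pow]
  rw [Finset.sum_eq_single i]
  · simp
  · intro b _ hb
    have : (b : ℕ) ≠ i := fun h => hb (Fin.ext h)
    rw [if_neg (by omega)]
    simp
  · simp

open Polynomial in
theorem PV_degree {n : ℕ} (u : Fin n → ℝ) : (PV u).degree < n := by
  unfold PV
  rw [← mem_degreeLT]
  refine Submodule.sum_mem _ fun i _ => ?_
  rw [mem_degreeLT]
  refine lt_of_le_of_lt (degree_C_mul_X_pow_le _ _) ?_
  have := i.2
  exact_mod_cast (by omega : n - 1 - (i : ℕ) < n)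

open Polynomial in
theorem PV_eq_zero {n : ℕ} (u : Fin n → ℝ) (h : PV u = 0) : u = 0 := by
  funext i
  rw [← PV_coeff u i, h]
  simp

open Polynomial in
theorem PV_add {n : ℕ} (u w : Fin n → ℝ) : PV (u + w) = PV u + PV w := by
  simp [PV, add_mul, Finset.sum_add_distrib]

open Polynomial in
theorem PV_smul {n : ℕ} (c : ℝ) (u : Fin n → ℝ) : PV (c • u) = C c * PV u := by
  simp [PV, Finset.mul_sum, mul_assoc]

open Polynomial in
theorem arma {n : ℕ} (hn : 0 < n) (a x : Fin n → ℝ) (w : ℕ → Fin n → ℝ) (k : ℕ) :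
    aeval shf (X ^ n + PV a) (fun k => stq (Acan n a) w x k ⟨0, hn⟩) k
      = ∑ i : Fin n, w (k + (n - 1 - i)) i := by
  have h := tele hn a x w n le_rfl k
  rw [map_add, LinearMap.add_apply, Pi.add_apply, aeval_PV, map_pow, aeval_X, shf_pow, h]
  rw [← Fin.sum_univ_eq_sum_range (fun i => (- vext a i * stq (Acan n a) w x (k + (n - 1 - i)) ⟨0, hn⟩
        + vext (w (k + (n - 1 - i))) i))]
  simp [vext, Finset.sum_add_distrib]

open Polynomial in
theorem PV_A {n : ℕ} (hn : 0 < n) (a u : Fin n → ℝ) :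
    PV (Acan n a *ᵥ u) = X * PV u - C (u ⟨0, hn⟩) * (X ^ n + PV a) := by
  have h : Acan n a *ᵥ u = (- u ⟨0, hn⟩) • a + fun i : Fin n => vext u (i + 1) := by
    funext i
    rw [Acan_mulVec hn]
    simp
    ring
  have h2 : X * PV u = C (u ⟨0, hn⟩) * X ^ n + PV (fun i : Fin n => vext u (i + 1)) := by
    obtain ⟨n, rfl⟩ : ∃ m, n = m + 1 := ⟨n - 1, by omega⟩
    unfold PV
    rw [Fin.sum_univ_succ, Fin.sum_univ_castSucc, mul_add, Finset.mul_sum]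
    congr 1
    · simp
      ring
    · simp only [vext, Fin.val_castSucc, Fin.val_last]
      simp
      apply Finset.sum_congr rfl
      intro i _
      have := i.2
      rw [show n - (i : ℕ) = n - (i + 1) + 1 by omega, pow_succ]
      rw [show i.succ = ⟨(i : ℕ) + 1, by omega⟩ from rfl]
      ring
  rw [h, PV_add, PV_smul, h2]
  simp
  ring

open Polynomial in
theorem PV_pow {n : ℕ} (hn : 0 < n) (a b : Fin n → ℝ) (k : ℕ) :
    (X ^ n + PV a) ∣ X ^ k * PV b - PV ((Acan n a ^ k) *ᵥ b) := by
  induction k with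
  | zero => simp
  | succ k ih =>
    rw [pow_succ' (Acan n a), ← Matrix.mulVec_mulVec, PV_A hn]
    obtain ⟨q, hq⟩ := ih
    refine ⟨X * q + C (((Acan n a ^ k) *ᵥ b) ⟨0, hn⟩), ?_⟩
    rw [pow_succ]
    linear_combination X * hq

open Polynomial in
theorem coprime_of_ctrb {n : ℕ} (hn : 0 < n) (a b : Fin n → ℝ) (h : (ctrbMat n a b).rank = n) :
    IsCoprime (X ^ n + PV a) (PV b) := by
  have hs : Function.Surjective (ctrbMat n a b).mulVecLin := by
    rw [← LinearMap.range_eq_top]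
    apply Submodule.eq_top_of_finrank_eq
    rw [← Matrix.rank, h]
    simp
  obtain ⟨c, hc⟩ := hs (Pi.single ⟨n - 1, by omega⟩ 1)
  have h1 : PV (Pi.single (⟨n - 1, by omega⟩ : Fin n) (1 : ℝ)) = 1 := by
    unfold PV
    rw [Finset.sum_eq_single (⟨n - 1, by omega⟩ : Fin n)]
    · simp
    · intro i _ hi
      simp [hi]
    · simp
  have h2 : PV ((ctrbMat n a b).mulVecLin c) = ∑ k : Fin n, C (c k) * PV ((Acan n a ^ (k : ℕ)) *ᵥ b) := by
    unfold PV
    simp only [Finset.mul_sum]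
    rw [Finset.sum_comm]
    apply Finset.sum_congr rfl
    intro i _
    simp only [Matrix.mulVecLin_apply, Matrix.mulVec, dotProduct, ctrbMat, map_sum, Finset.sum_mul]
    simp only [map_mul, map_sum, Finset.mul_sum]
    refine Finset.sum_congr rfl fun _ _ => Finset.sum_congr rfl fun _ _ => ?_
    ring
  rw [hc, h1] at h2
  have h3 : (X ^ n + PV a) ∣ (∑ k : Fin n, C (c k) * X ^ (k : ℕ)) * PV b - 1 := by
    rw [h2, Finset.sum_mul, ← Finset.sum_sub_distrib]
    apply Finset.dvd_sum
    intro k _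
    rw [mul_assoc, ← mul_sub]
    exact (PV_pow hn a b k).mul_left _
  obtain ⟨q, hq⟩ := h3
  exact ⟨-q, ∑ k : Fin n, C (c k) * X ^ (k : ℕ), by linear_combination hq⟩

/-- error state sequence -/
def est {n m : ℕ} (hn : 0 < n) (a x' a' b' : Fin n → ℝ) (v : Fin m → ℝ) (dx da db : Fin n → ℝ) :
    ℕ → Fin n → ℝ :=
  stq (Acan n a) (fun k => (-(stq (Acan n a') (fun j => vext v j • b') x' k ⟨0, hn⟩)) • da
    + vext v k • db) dx

theorem est_diff {n m : ℕ} (hn : 0 < n) (x a b x' a' b' : Fin n → ℝ) (v : Fin m → ℝ) (k : ℕ) :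
    est hn a x' a' b' v (x' - x) (a' - a) (b' - b) k =
      stq (Acan n a') (fun j => vext v j • b') x' k - stq (Acan n a) (fun j => vext v j • b) x k := by
  induction k with
  | zero => rfl
  | succ k ih =>
    unfold est at ih ⊢
    rw [stq, ih, stq, stq]
    funext i
    simp only [Pi.add_apply, Pi.sub_apply, Pi.smul_apply, smul_eq_mul, Acan_mulVec hn,
      Matrix.mulVec_sub]
    ring

theorem est_smul {n m : ℕ} (hn : 0 < n) (a x' a' b' : Fin n → ℝ) (v : Fin m → ℝ)
    (dx da db : Fin n → ℝ) (t : ℝ) (k : ℕ) :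
    est hn a x' a' b' v (t • dx) (t • da) (t • db) k = t • est hn a x' a' b' v dx da db k := by
  induction k with
  | zero => rfl
  | succ k ih =>
    unfold est at ih ⊢
    rw [stq, ih, stq, Matrix.mulVec_smul]
    funext i
    simp only [Pi.add_apply, Pi.smul_apply, smul_eq_mul]
    ring

theorem stq_cont {n : ℕ} {T : Type*} [TopologicalSpace T] (a : T → Fin n → ℝ) (ha : Continuous a)
    (w : T → ℕ → Fin n → ℝ) (hw : ∀ k, Continuous fun p => w p k)
    (x : T → Fin n → ℝ) (hx : Continuous x) (k : ℕ) :
    Continuous fun p => stq (Acan n (a p)) (w p) (x p) k := by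
  have hA : Continuous fun p => Acan n (a p) := by
    apply continuous_matrix
    intro i j
    unfold Acan
    split_ifs <;> fun_prop
  induction k with
  | zero => exact hx
  | succ k ih => exact (hA.matrix_mulVec ih).add (hw k)

theorem vext_cont {m : ℕ} {T : Type*} [TopologicalSpace T] (v : T → Fin m → ℝ) (hv : Continuous v)
    (k : ℕ) : Continuous fun p => vext (v p) k := by
  unfold vext
  split_ifs <;> fun_prop

theorem est_cont {n m : ℕ} (hn : 0 < n) {T : Type*} [TopologicalSpace T]
    (a x' a' b' dx da db : T → Fin n → ℝ) (v : T → Fin m → ℝ)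
    (ha : Continuous a) (hx' : Continuous x') (ha' : Continuous a') (hb' : Continuous b')
    (hdx : Continuous dx) (hda : Continuous da) (hdb : Continuous db) (hv : Continuous v) (k : ℕ) :
    Continuous fun p => est hn (a p) (x' p) (a' p) (b' p) (v p) (dx p) (da p) (db p) k := by
  unfold est
  refine stq_cont a ha _ (fun k => ?_) dx hdx k
  have h1 := stq_cont a' ha' (fun p j => vext (v p) j • b' p)
    (fun k => (vext_cont v hv k).smul hb') x' hx' k
  have h2 := (continuous_apply (⟨0, hn⟩ : Fin n)).comp h1
  exact (h2.neg.smul hda).add ((vext_cont v hv k).smul hdb)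

open Polynomial in
theorem est_inj {n : ℕ} (hn : 0 < n) (a x' a' b' : Fin n → ℝ) (v : Fin (4 * n - 1) → ℝ)
    (dx da db : Fin n → ℝ) (hc : (ctrbMat n a' b').rank = n)
    (hU : IsUnit (hankelOf (2 * n) (4 * n - 1) v).det)
    (h0 : ∀ k < 4 * n, est hn a x' a' b' v dx da db k ⟨0, hn⟩ = 0) :
    dx = 0 ∧ da = 0 ∧ db = 0 := by
  set y' : ℕ → ℝ := fun k => stq (Acan n a') (fun j => vext v j • b') x' k ⟨0, hn⟩ with hy'
  set η : ℕ → ℝ := fun k => est hn a x' a' b' v dx da db k ⟨0, hn⟩ with hη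
  have e1 : aeval shf (X ^ n + PV a') y' = aeval shf (PV b') (vext v) := by
    funext k
    rw [arma hn a' x', aeval_PV]
    refine Finset.sum_congr rfl fun i _ => ?_
    simp [mul_comm]
  have e2 : aeval shf (X ^ n + PV a) η = - aeval shf (PV da) y' + aeval shf (PV db) (vext v) := by
    funext k
    rw [hη]
    unfold est
    rw [arma hn a dx, Pi.add_apply, Pi.neg_apply, aeval_PV, aeval_PV, ← Finset.sum_neg_distrib,
      ← Finset.sum_add_distrib]
    refine Finset.sum_congr rfl fun i _ => ?_
    simp [hy', mul_comm]
  set c : ℝ[X] := (X ^ n + PV a') * PV db - PV da * PV b' with hcdef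
  have e3 : aeval shf c (vext v) = aeval shf ((X ^ n + PV a') * (X ^ n + PV a)) η := by
    rw [map_mul, Module.End.mul_apply, e2, map_add, map_neg]
    rw [← Module.End.mul_apply, ← Module.End.mul_apply, ← map_mul, ← map_mul,
      mul_comm (X ^ n + PV a') (PV da), map_mul _ (PV da), Module.End.mul_apply, e1,
      ← Module.End.mul_apply, ← map_mul, hcdef, map_sub, LinearMap.sub_apply]
    abel
  have dA : ∀ u : Fin n → ℝ, (X ^ n + PV u).degree = (n : WithBot ℕ) := fun u => by
    rw [degree_add_eq_left_of_degree_lt]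
    · simp
    · rw [degree_X_pow]; exact PV_degree u
  have nA : ∀ u : Fin n → ℝ, (X ^ n + PV u).natDegree = n := fun u =>
    natDegree_eq_of_degree_eq_some (dA u)
  have nP : ∀ u : Fin n → ℝ, (PV u).natDegree ≤ n - 1 := fun u => by
    have := PV_degree u
    rw [natDegree_le_iff_degree_le]
    by_cases h : PV u = 0
    · simp [h]
    · rw [degree_eq_natDegree h] at this ⊢
      have h1 : (PV u).natDegree < n := by exact_mod_cast this
      exact_mod_cast (by omega : (PV u).natDegree ≤ n - 1)
  have nc : c.natDegree < 2 * n := by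
    refine lt_of_le_of_lt (natDegree_sub_le _ _) (max_lt ?_ ?_)
    · refine lt_of_le_of_lt natDegree_mul_le ?_
      have := nP db
      rw [nA]; omega
    · refine lt_of_le_of_lt natDegree_mul_le ?_
      have := nP db
      have := nP da
      have := nP b'
      omega
  have nAA : ((X ^ n + PV a') * (X ^ n + PV a)).natDegree < 2 * n + 1 := by
    refine lt_of_le_of_lt natDegree_mul_le ?_
    rw [nA, nA]; omega
  have e4 : ∀ k < 2 * n, ∑ i ∈ Finset.range (2 * n), c.coeff i * vext v (k + i) = 0 := by
    intro k hk
    rw [← aeval_shf c _ nc, e3, aeval_shf _ _ nAA]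
    apply Finset.sum_eq_zero
    intro i hi
    have := Finset.mem_range.1 hi
    rw [show η (k + i) = 0 from h0 (k + i) (by omega), mul_zero]
  have e5 : (hankelOf (2 * n) (4 * n - 1) v) *ᵥ (fun i => c.coeff (i : ℕ)) = 0 := by
    funext k
    rw [Pi.zero_apply, ← e4 k k.2, ← Fin.sum_univ_eq_sum_range (fun i => c.coeff i * vext v (k + i))]
    simp only [Matrix.mulVec, dotProduct, hankelOf, vext]
    exact Finset.sum_congr rfl fun i _ => mul_comm _ _
  have e6 := Matrix.eq_zero_of_mulVec_eq_zero hU.ne_zero e5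
  have c0 : c = 0 := by
    ext i
    by_cases hi : i < 2 * n
    · simpa using congrFun e6 ⟨i, hi⟩
    · rw [coeff_eq_zero_of_natDegree_lt (by omega)]; simp
  have hcop := coprime_of_ctrb hn a' b' hc
  have hdvd : (X ^ n + PV a') ∣ PV da := by
    apply hcop.dvd_of_dvd_mul_right
    exact ⟨PV db, by rw [hcdef, sub_eq_zero] at c0; exact c0.symm⟩
  have hda : PV da = 0 := by
    apply eq_zero_of_dvd_of_degree_lt hdvd
    rw [dA]; exact PV_degree da
  have hdb : PV db = 0 := by
    rw [hcdef, hda, zero_mul, sub_zero] at c0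
    refine (mul_eq_zero.1 c0).resolve_left fun h => ?_
    have := dA a'
    rw [h] at this
    simp at this
  have hda := PV_eq_zero _ hda
  have hdb := PV_eq_zero _ hdb
  refine ⟨?_, hda, hdb⟩
  funext i
  have ht := tele hn a dx (fun k => (-(y' k)) • da + vext v k • db) i i.2.le 0
  have hz : ∀ k < 4 * n, stq (Acan n a) (fun k => (-(y' k)) • da + vext v k • db) dx k ⟨0, hn⟩ = 0 :=
    h0
  rw [hz _ (by omega), Finset.sum_eq_zero] at ht
  · simpa [stq, vext] using ht.symm
  · intro j hj
    rw [hz _ (by omega), hda, hdb]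
    simp [vext]

/-- STATEMENT 9 (Proposition 4, uniform differential injectivity for the canonical
form), with `𝓗_{4n−1} = 𝓗` built from the `4n` rows `C A^j`, `j = 0,…,4n−1`, and
`v = (v_0,…,v_{4n−2}) ∈ ℝ^{4n−1}`. -/
theorem uniform_differential_injectivity_canonical
    (n : ℕ) (hn : 0 < n)
    (Cx : Set (Fin n → ℝ)) (hCxo : IsOpen Cx) (hCxb : Bornology.IsBounded Cx)
    (Cθ : Set ((Fin n → ℝ) × (Fin n → ℝ)))
    (hCθo : IsOpen Cθ) (hCθb : Bornology.IsBounded Cθ)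
    (hctrb : ∀ θ ∈ closure Cθ, (ctrbMat n θ.1 θ.2).rank = n)
    (U : Set (Fin (4 * n - 1) → ℝ)) (hUc : IsCompact U)
    (hU : ∀ v ∈ U, IsUnit (hankelOf (2 * n) (4 * n - 1) v).det) :
    ∃ LH > (0 : ℝ),
      ∀ x ∈ closure Cx, ∀ x' ∈ closure Cx, ∀ θ ∈ closure Cθ, ∀ θ' ∈ closure Cθ,
      ∀ v ∈ U,
        eNorm (HHcan n (4 * n) x' θ'.1 θ'.2 v - HHcan n (4 * n) x θ.1 θ.2 v)
          ≥ LH * Real.sqrt (∑ i, (x i - x' i) ^ 2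
              + (∑ j, (θ.1 j - θ'.1 j) ^ 2 + ∑ j, (θ.2 j - θ'.2 j) ^ 2)) := by
  set QQ : (Fin n → ℝ) × (Fin n → ℝ) × (Fin n → ℝ) → ℝ := fun z =>
    ∑ i, (z.1 i) ^ 2 + (∑ j, (z.2.1 j) ^ 2 + ∑ j, (z.2.2 j) ^ 2) with hQQ
  have hQc : Continuous QQ := by
    rw [hQQ]; fun_prop
  have hQn : ∀ z, 0 ≤ QQ z := fun z => by
    simp only [hQQ]; positivity
  have hcomp : ∀ z, (∀ i, z.1 i ^ 2 ≤ QQ z) ∧ (∀ i, z.2.1 i ^ 2 ≤ QQ z) ∧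
      (∀ i, z.2.2 i ^ 2 ≤ QQ z) := by
    intro z
    have s : ∀ u : Fin n → ℝ, 0 ≤ ∑ i, u i ^ 2 := fun u => Finset.sum_nonneg fun i _ => sq_nonneg _
    have t : ∀ (u : Fin n → ℝ) (i : Fin n), u i ^ 2 ≤ ∑ i, u i ^ 2 := fun u i =>
      Finset.single_le_sum (f := fun i => u i ^ 2) (fun i _ => sq_nonneg _) (Finset.mem_univ i)
    have s1 := s z.1
    have s2 := s z.2.1
    have s3 := s z.2.2
    simp only [hQQ]
    refine ⟨fun i => ?_, fun i => ?_, fun i => ?_⟩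
    · linarith [t z.1 i]
    · linarith [t z.2.1 i]
    · linarith [t z.2.2 i]
  set S : Set ((Fin n → ℝ) × (Fin n → ℝ) × (Fin n → ℝ)) := {z | QQ z = 1} with hS
  have hSc : IsCompact S := by
    refine (isCompact_closedBall (0 : (Fin n → ℝ) × (Fin n → ℝ) × (Fin n → ℝ)) 1).of_isClosed_subset
      (isClosed_eq hQc continuous_const) ?_
    intro z hz
    have hz : QQ z = 1 := hz
    obtain ⟨h1, h2, h3⟩ := hcomp z
    rw [hz] at h1 h2 h3
    rw [mem_closedBall_zero_iff, Prod.norm_def, Prod.norm_def]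
    refine max_le ?_ (max_le ?_ ?_) <;> rw [pi_norm_le_iff_of_nonneg zero_le_one] <;> intro i <;>
      rw [Real.norm_eq_abs, ← sq_le_one_iff_abs_le_one]
    · exact h1 i
    · exact h2 i
    · exact h3 i
  set K := (closure Cθ ×ˢ closure Cx ×ˢ closure Cθ ×ˢ U) ×ˢ S with hK
  have hKc : IsCompact K :=
    (hCθb.isCompact_closure.prod (hCxb.isCompact_closure.prod
      (hCθb.isCompact_closure.prod hUc))).prod hSc
  set G : (((Fin n → ℝ) × (Fin n → ℝ)) × (Fin n → ℝ) × ((Fin n → ℝ) × (Fin n → ℝ)) ×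
      (Fin (4 * n - 1) → ℝ)) × ((Fin n → ℝ) × (Fin n → ℝ) × (Fin n → ℝ)) → ℝ := fun p =>
    ∑ k : Fin (4 * n), (est hn p.1.1.1 p.1.2.1 p.1.2.2.1.1 p.1.2.2.1.2 p.1.2.2.2 p.2.1 p.2.2.1 p.2.2.2
      k ⟨0, hn⟩) ^ 2 with hG
  have hGc : Continuous G := by
    rw [hG]
    refine continuous_finsetSum _ fun k _ => ?_
    refine Continuous.pow ?_ 2
    refine (continuous_apply (⟨0, hn⟩ : Fin n)).comp ?_
    apply est_cont hn <;> fun_prop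
  have hpos : ∀ p ∈ K, 0 < G p := by
    rintro ⟨⟨θ, x', θ', v⟩, z⟩ ⟨⟨hθ, hx', hθ', hv⟩, hz⟩
    have h0 : 0 ≤ G ⟨⟨θ, x', θ', v⟩, z⟩ := Finset.sum_nonneg fun i _ => sq_nonneg _
    refine lt_of_le_of_ne h0 fun h => ?_
    have h := (Finset.sum_eq_zero_iff_of_nonneg (fun i _ => sq_nonneg _)).1 h.symm
    obtain ⟨h1, h2, h3⟩ := est_inj hn θ.1 x' θ'.1 θ'.2 v z.1 z.2.1 z.2.2 (hctrb θ' hθ') (hU v hv)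
      (fun k hk => by simpa using h ⟨k, hk⟩ (Finset.mem_univ _))
    have hz : QQ z = 1 := hz
    simp [hQQ, h1, h2, h3] at hz
  obtain ⟨μ, hμ, hmin⟩ := hKc.exists_forall_le' hGc.continuousOn hpos
  refine ⟨Real.sqrt μ, Real.sqrt_pos.2 hμ, ?_⟩
  intro x hx x' hx' θ hθ θ' hθ' v hv
  set z : (Fin n → ℝ) × (Fin n → ℝ) × (Fin n → ℝ) := (x' - x, θ'.1 - θ.1, θ'.2 - θ.2) with hz
  have hQz : ∑ i, (x i - x' i) ^ 2
              + (∑ j, (θ.1 j - θ'.1 j) ^ 2 + ∑ j, (θ.2 j - θ'.2 j) ^ 2) = QQ z := by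
    simp only [hQQ, hz, Pi.sub_apply]
    congr 1
    · exact Finset.sum_congr rfl fun i _ => by ring
    · congr 1 <;> exact Finset.sum_congr rfl fun i _ => by ring
  have hGz : eNorm (HHcan n (4 * n) x' θ'.1 θ'.2 v - HHcan n (4 * n) x θ.1 θ.2 v)
      = Real.sqrt (G ⟨⟨θ, x', θ', v⟩, z⟩) := by
    unfold eNorm
    congr 1
    refine Finset.sum_congr rfl fun k _ => ?_
    rw [Pi.sub_apply, HHcan_apply hn, HHcan_apply hn]
    simp only [hz, est_diff, Pi.sub_apply]
  rw [hQz, hGz, ← Real.sqrt_mul hμ.le]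
  apply Real.sqrt_le_sqrt
  by_cases hq : QQ z = 0
  · rw [hq, mul_zero]
    exact Finset.sum_nonneg fun i _ => sq_nonneg _
  · have hq' : 0 < QQ z := lt_of_le_of_ne (hQn z) (Ne.symm hq)
    set t := (Real.sqrt (QQ z))⁻¹ with ht
    have ht2 : t ^ 2 = (QQ z)⁻¹ := by rw [ht, inv_pow, Real.sq_sqrt (hQn z)]
    have hQt : QQ (t • z) = 1 := by
      have : QQ (t • z) = t ^ 2 * QQ z := by
        simp only [hQQ, Prod.smul_fst, Prod.smul_snd, Pi.smul_apply, smul_eq_mul, mul_pow, mul_add,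
          Finset.mul_sum]
      rw [this, ht2, inv_mul_cancel₀ hq]
    have hGt : G ⟨⟨θ, x', θ', v⟩, t • z⟩ = t ^ 2 * G ⟨⟨θ, x', θ', v⟩, z⟩ := by
      simp only [hG, Prod.smul_fst, Prod.smul_snd, est_smul, Pi.smul_apply, smul_eq_mul, mul_pow,
        Finset.mul_sum]
    have := hmin ⟨⟨θ, x', θ', v⟩, t • z⟩ ⟨⟨hθ, hx', hθ', hv⟩, hQt⟩
    rw [hGt, ht2] at this
    calc μ * QQ z ≤ ((QQ z)⁻¹ * G ⟨⟨θ, x', θ', v⟩, z⟩) * QQ z := by gcongr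
      _ = _ := by field_simp
end

section
/- Explicit left inverse T* (Proposition 5). Consider the canonical form with θ = (θ_a, θ_b) ∈ R^{2n}. Let C_x ⊂ R^n, C_θ ⊂ R^{2n} and C_w ⊂ R^r be bounded open sets, let λ_1, …, λ_r be negative reals such that λ_i is not an eigenvalue of A(θ_a) for all θ ∈ Cl(C_θ), and let T be the associated Luenberger map. Assume there is L_T > 0 with |T(x,θ,w) − T(x*,θ*,w)| ≥ L_T |(x−x*, θ−θ*)| for all (x,θ), (x*,θ*) ∈ Cl(C_x)×Cl(C_θ) and w ∈ Cl(C_w). Then there exist positive reals p_min, ε_T and L_{T*} such that the function T*(z,w) = (P(z,w)^T P(z,w))^{-1} P(z,w)^T z when P(z,w)^T P(z,w) ⪰ p_min I_{3n}, and T*(z,w) = 0 otherwise, is well defined and satisfies: for all (x, θ, w) ∈ Cl(C_x)×Cl(C_θ)×Cl(C_w) and all z ∈ R^r with |z − T(x,θ,w)| ≤ ε_T, |T*(z,w) − (x, θ_a, θ_b)| ≤ L_{T*} |z − T(x,θ,w)|. -/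
open scoped Matrix BigOperators

/-- `V_λ = −(1/λ, 1/λ², …, 1/λ^n)ᵀ`. -/
noncomputable def Vlam (n : ℕ) (lam : ℝ) : Fin n → ℝ :=
  fun i => -(1 / lam ^ ((i : ℕ) + 1))

/-- The Luenberger map for the canonical form :
`T(x,θ,w)ᵢ = e₁ᵀ (A(θ_a) − λᵢ Iₙ)⁻¹ (x − wᵢ θ_b)`. -/
noncomputable def Tcan (n r : ℕ) (lam : Fin r → ℝ) (x θa θb : Fin n → ℝ)
    (w : Fin r → ℝ) : Fin r → ℝ :=
  fun i => Matrix.vecMul (e1 n) (Acan n θa - lam i • (1 : Matrix (Fin n) (Fin n) ℝ))⁻¹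
    ⬝ᵥ (x - w i • θb)

/-- The `r × 3n` matrix `P(z,w)` with rows `Pᵢ = [V_{λᵢ}ᵀ, zᵢ V_{λᵢ}ᵀ, −wᵢ V_{λᵢ}ᵀ]`. -/
noncomputable def Pmat (n r : ℕ) (lam : Fin r → ℝ) (z w : Fin r → ℝ) :
    Matrix (Fin r) (Fin (3 * n)) ℝ :=
  fun i j =>
    if h : (j : ℕ) < n then Vlam n (lam i) ⟨(j : ℕ), h⟩
    else if h2 : (j : ℕ) < 2 * n then z i * Vlam n (lam i) ⟨(j : ℕ) - n, by omega⟩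
    else -(w i) * Vlam n (lam i) ⟨(j : ℕ) - 2 * n, by have := j.2; omega⟩

/-- The concatenation `(x, θ_a, θ_b) ∈ ℝ^{3n}`. -/
def stack3 (n : ℕ) (x θa θb : Fin n → ℝ) : Fin (3 * n) → ℝ :=
  fun j =>
    if h : (j : ℕ) < n then x ⟨(j : ℕ), h⟩
    else if h2 : (j : ℕ) < 2 * n then θa ⟨(j : ℕ) - n, by omega⟩
    else θb ⟨(j : ℕ) - 2 * n, by have := j.2; omega⟩

open Classical in
/-- The explicit left inverse `T*(z,w)` of Proposition 5. -/
noncomputable def TstarExpl (n r : ℕ) (lam : Fin r → ℝ) (pmin : ℝ)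
    (z w : Fin r → ℝ) : Fin (3 * n) → ℝ :=
  if Matrix.PosSemidef ((Pmat n r lam z w)ᵀ * Pmat n r lam z w
      - pmin • (1 : Matrix (Fin (3 * n)) (Fin (3 * n)) ℝ)) then
    (((Pmat n r lam z w)ᵀ * Pmat n r lam z w)⁻¹ * (Pmat n r lam z w)ᵀ) *ᵥ z
  else 0

lemma eNorm_eq {m : ℕ} (x : Fin m → ℝ) : eNorm x = ‖WithLp.toLp 2 x‖ := by
  simp [eNorm, EuclideanSpace.norm_eq]

lemma eNorm_nonneg {m : ℕ} (x : Fin m → ℝ) : 0 ≤ eNorm x := Real.sqrt_nonneg _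

lemma eNorm_sq {m : ℕ} (x : Fin m → ℝ) : eNorm x ^ 2 = x ⬝ᵥ x := by
  rw [eNorm, Real.sq_sqrt (Finset.sum_nonneg fun i _ => sq_nonneg _)]
  simp [dotProduct, sq]

lemma eNorm_add_le {m : ℕ} (x y : Fin m → ℝ) : eNorm (x + y) ≤ eNorm x + eNorm y := by
  simp only [eNorm_eq, WithLp.toLp_add]
  exact norm_add_le _ _

lemma eNorm_smul {m : ℕ} (t : ℝ) (x : Fin m → ℝ) : eNorm (t • x) = |t| * eNorm x := by
  simp only [eNorm_eq, WithLp.toLp_smul, norm_smul, Real.norm_eq_abs]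

lemma dot_le_eNorm {m : ℕ} (x y : Fin m → ℝ) : x ⬝ᵥ y ≤ eNorm x * eNorm y := by
  rw [eNorm, eNorm]
  exact Real.sum_mul_le_sqrt_mul_sqrt _ _ _

lemma eNorm_neg {m : ℕ} (x : Fin m → ℝ) : eNorm (-x) = eNorm x := by
  simp [eNorm]

lemma abs_dot_le_eNorm {m : ℕ} (x y : Fin m → ℝ) : |x ⬝ᵥ y| ≤ eNorm x * eNorm y := by
  rw [abs_le']
  refine ⟨dot_le_eNorm x y, ?_⟩
  have := dot_le_eNorm (-x) y
  rwa [neg_dotProduct, eNorm_neg] at this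

lemma eNorm_le_mul {m : ℕ} (K : ℝ) (hK : 0 ≤ K) (x y : Fin m → ℝ)
    (h : ∀ i, |x i| ≤ K * |y i|) : eNorm x ≤ K * eNorm y := by
  rw [show K * eNorm y = eNorm (K • y) by rw [eNorm_smul, abs_of_nonneg hK], eNorm, eNorm]
  refine Real.sqrt_le_sqrt (Finset.sum_le_sum fun i _ => ?_)
  apply sq_le_sq.2
  simpa [abs_mul, abs_of_nonneg hK] using h i

lemma continuous_eNorm {m : ℕ} : Continuous (eNorm : (Fin m → ℝ) → ℝ) := by
  unfold eNorm; fun_prop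

lemma sum_fin3 (n : ℕ) (f : Fin (3 * n) → ℝ) :
    ∑ j, f j = ∑ i : Fin n, f ⟨i, by omega⟩ + ∑ i : Fin n, f ⟨n + i, by omega⟩
      + ∑ i : Fin n, f ⟨n + n + i, by omega⟩ := by
  have h : n + n + n = 3 * n := by ring
  rw [← Equiv.sum_comp (finCongr h) f, Fin.sum_univ_add, Fin.sum_univ_add]
  rfl

lemma stack3_surj (n : ℕ) (d : Fin (3 * n) → ℝ) : ∃ a b c, stack3 n a b c = d := by
  refine ⟨fun i => d ⟨i, by omega⟩, fun i => d ⟨n + i, by omega⟩,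
    fun i => d ⟨n + n + i, by omega⟩, ?_⟩
  funext j
  unfold stack3
  split_ifs with h h2
  · rfl
  · refine congrArg d (Fin.ext ?_); simp; omega
  · refine congrArg d (Fin.ext ?_); simp; omega

lemma stack3_at1 (n : ℕ) (a b c : Fin n → ℝ) (i : Fin n) (h) :
    stack3 n a b c ⟨i, h⟩ = a i := by simp [stack3]
lemma stack3_at2 (n : ℕ) (a b c : Fin n → ℝ) (i : Fin n) (h) :
    stack3 n a b c ⟨n + i, h⟩ = b i := by
  have : n + (i : ℕ) < 2 * n := by omega
  simp [stack3, this]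
lemma stack3_at3 (n : ℕ) (a b c : Fin n → ℝ) (i : Fin n) (h) :
    stack3 n a b c ⟨n + n + i, h⟩ = c i := by
  have h1 : ¬ n + n + (i : ℕ) < 2 * n := by omega
  have h2 : ¬ n + n + (i : ℕ) < n := by omega
  simp only [stack3, h1, h2, dite_false]
  congr 1; ext; simp; omega

lemma Pmat_row (n r : ℕ) (lam z w : Fin r → ℝ) (i : Fin r) :
    Pmat n r lam z w i = stack3 n (Vlam n (lam i)) (z i • Vlam n (lam i))
      (-(w i) • Vlam n (lam i)) := by
  funext j
  unfold Pmat stack3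
  split_ifs <;> simp

lemma stack3_dot (n : ℕ) (a b c a' b' c' : Fin n → ℝ) :
    stack3 n a b c ⬝ᵥ stack3 n a' b' c' = a ⬝ᵥ a' + b ⬝ᵥ b' + c ⬝ᵥ c' := by
  simp only [dotProduct]
  rw [sum_fin3]
  simp only [stack3_at1, stack3_at2, stack3_at3]

lemma Pmat_mul (n r : ℕ) (lam z w : Fin r → ℝ) (i : Fin r) (a b c : Fin n → ℝ) :
    (Pmat n r lam z w *ᵥ stack3 n a b c) i = Vlam n (lam i) ⬝ᵥ a
      + z i * (Vlam n (lam i) ⬝ᵥ b) - w i * (Vlam n (lam i) ⬝ᵥ c) := by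
  rw [Matrix.mulVec, Pmat_row, stack3_dot]
  simp [smul_dotProduct]
  ring

lemma eNorm_stack3 (n : ℕ) (a b c : Fin n → ℝ) :
    eNorm (stack3 n a b c) = Real.sqrt (∑ i, a i ^ 2 + (∑ i, b i ^ 2 + ∑ i, c i ^ 2)) := by
  rw [eNorm, sum_fin3]
  simp only [stack3_at1, stack3_at2, stack3_at3]
  rw [add_assoc]

/-- The scalar `1 - V_λ ⬝ θ_a`. -/
noncomputable def qf (n : ℕ) (lam : ℝ) (θa : Fin n → ℝ) : ℝ := 1 - Vlam n lam ⬝ᵥ θa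

lemma Vlam_vecMul (n : ℕ) (lam : ℝ) (hl : lam ≠ 0) (θa : Fin n → ℝ) :
    Vlam n lam ᵥ* (Acan n θa - lam • (1 : Matrix (Fin n) (Fin n) ℝ)) = qf n lam θa • e1 n := by
  rw [Matrix.vecMul_sub, Matrix.vecMul_smul, Matrix.vecMul_one]
  funext j
  simp only [Pi.sub_apply, Pi.smul_apply, smul_eq_mul, Matrix.vecMul, dotProduct, Acan, e1, qf]
  obtain ⟨j, hj⟩ := j
  cases j with
  | zero =>
    simp [Vlam, hl]
    ring
  | succ k =>
    have : ∀ i : Fin n, (k + 1 = (i : ℕ) + 1) ↔ i = ⟨k, by omega⟩ := by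
      intro i; rw [Fin.ext_iff]; simp; omega
    simp only [this]
    simp [Vlam]
    field_simp
    ring

lemma qf_ne (n : ℕ) (hn : 0 < n) (lam : ℝ) (hl : lam ≠ 0) (θa : Fin n → ℝ)
    (hu : IsUnit (Acan n θa - lam • (1 : Matrix (Fin n) (Fin n) ℝ)).det) :
    qf n lam θa ≠ 0 := by
  intro h
  have h1 := Vlam_vecMul n lam hl θa
  rw [h, zero_smul] at h1
  have h2 := congrArg (fun v => v ᵥ* (Acan n θa - lam • (1 : Matrix (Fin n) (Fin n) ℝ))⁻¹) h1
  simp only [Matrix.vecMul_vecMul, Matrix.mul_nonsing_inv _ hu, Matrix.vecMul_one,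
    Matrix.zero_vecMul] at h2
  have h3 := congrFun h2 ⟨0, hn⟩
  simp [Vlam, hl] at h3

lemma qf_mul_T (n r : ℕ) (lam : Fin r → ℝ) (i : Fin r) (hl : lam i ≠ 0) (x θa θb : Fin n → ℝ)
    (w : Fin r → ℝ)
    (hu : IsUnit (Acan n θa - lam i • (1 : Matrix (Fin n) (Fin n) ℝ)).det) :
    qf n (lam i) θa * Tcan n r lam x θa θb w i = Vlam n (lam i) ⬝ᵥ (x - w i • θb) := by
  have h1 := Vlam_vecMul n (lam i) hl θa
  have h2 := congrArg (fun v => v ᵥ* (Acan n θa - lam i • (1 : Matrix (Fin n) (Fin n) ℝ))⁻¹) h1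
  simp only [Matrix.vecMul_vecMul, Matrix.mul_nonsing_inv _ hu, Matrix.vecMul_one,
    Matrix.smul_vecMul] at h2
  rw [h2, smul_dotProduct, smul_eq_mul, Tcan]

lemma T_rel (n r : ℕ) (lam : Fin r → ℝ) (i : Fin r) (hl : lam i ≠ 0) (x θa θb : Fin n → ℝ)
    (w z : Fin r → ℝ)
    (hu : IsUnit (Acan n θa - lam i • (1 : Matrix (Fin n) (Fin n) ℝ)).det) :
    (Pmat n r lam z w *ᵥ stack3 n x θa θb) i
      = z i - qf n (lam i) θa * (z i - Tcan n r lam x θa θb w i) := by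
  rw [Pmat_mul, mul_sub, qf_mul_T n r lam i hl x θa θb w hu]
  simp [qf, dotProduct_sub, dotProduct_smul]
  ring

lemma stack3_lin (n : ℕ) (t : ℝ) (a b c a' b' c' : Fin n → ℝ) :
    stack3 n (a + t • a') (b + t • b') (c + t • c') = stack3 n a b c + t • stack3 n a' b' c' := by
  funext j
  simp only [stack3, Pi.add_apply, Pi.smul_apply]
  split_ifs <;> rfl

lemma eNorm_zero {m : ℕ} : eNorm (0 : Fin m → ℝ) = 0 := by simp [eNorm]

/-- least squares stability -/
lemma lsq (m r : ℕ) (P : Matrix (Fin r) (Fin m) ℝ) (c : ℝ) (hc : 0 < c)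
    (hP : ∀ d, c * eNorm d ≤ eNorm (P *ᵥ d)) (z : Fin r → ℝ) (s : Fin m → ℝ) :
    Matrix.PosSemidef (Pᵀ * P - (c ^ 2) • (1 : Matrix (Fin m) (Fin m) ℝ)) ∧
    c * eNorm (((Pᵀ * P)⁻¹ * Pᵀ) *ᵥ z - s) ≤ eNorm (z - P *ᵥ s) := by
  have hG : ∀ d v, d ⬝ᵥ ((Pᵀ * P) *ᵥ v) = (P *ᵥ d) ⬝ᵥ (P *ᵥ v) := by
    intro d v
    rw [← Matrix.mulVec_mulVec, Matrix.dotProduct_mulVec, Matrix.vecMul_transpose]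
  constructor
  · refine Matrix.PosSemidef.of_dotProduct_mulVec_nonneg ?_ ?_
    · rw [Matrix.IsHermitian, Matrix.conjTranspose_eq_transpose_of_trivial]
      simp [Matrix.transpose_sub, Matrix.transpose_mul]
    · intro d
      rw [star_trivial, Matrix.sub_mulVec, dotProduct_sub, hG, Matrix.smul_mulVec,
        Matrix.one_mulVec, dotProduct_smul, ← eNorm_sq, ← eNorm_sq, smul_eq_mul, ← mul_pow,
        sub_nonneg]
      exact pow_le_pow_left₀ (mul_nonneg hc.le (eNorm_nonneg _)) (hP d) 2
  · have hinj : Function.Injective ((Pᵀ * P).mulVec) := by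
      intro a b hab
      have h0 : (Pᵀ * P) *ᵥ (a - b) = 0 := by
        rw [Matrix.mulVec_sub]; exact sub_eq_zero.2 hab
      have h1 := hG (a - b) (a - b)
      rw [h0, dotProduct_zero, ← eNorm_sq] at h1
      have h2 : eNorm (P *ᵥ (a - b)) = 0 := by
        exact pow_eq_zero_iff (two_ne_zero) |>.1 h1.symm
      have h3 := hP (a - b)
      rw [h2] at h3
      have h4 : eNorm (a - b) = 0 := by
        have := eNorm_nonneg (a - b); nlinarith
      have h5 := eNorm_sq (a - b)
      rw [h4] at h5
      exact sub_eq_zero.1 (dotProduct_self_eq_zero.1 (by rw [← h5]; simp))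
    have hu : IsUnit (Pᵀ * P).det :=
      (Matrix.isUnit_iff_isUnit_det _).1 (Matrix.mulVec_injective_iff_isUnit.1 hinj)
    set u := ((Pᵀ * P)⁻¹ * Pᵀ) *ᵥ z - s with hu'
    have h1 : (Pᵀ * P) *ᵥ u = Pᵀ *ᵥ (z - P *ᵥ s) := by
      rw [hu', Matrix.mulVec_sub, Matrix.mulVec_mulVec, ← Matrix.mul_assoc,
        Matrix.mul_nonsing_inv _ hu, Matrix.one_mul, Matrix.mulVec_sub, Matrix.mulVec_mulVec]
    have h2 : eNorm (P *ᵥ u) ^ 2 ≤ eNorm (P *ᵥ u) * eNorm (z - P *ᵥ s) := by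
      rw [eNorm_sq, ← hG, h1, Matrix.dotProduct_mulVec, Matrix.vecMul_transpose]
      exact dot_le_eNorm _ _
    refine (hP u).trans ?_
    by_contra hlt
    push Not at hlt
    have := eNorm_nonneg (z - P *ᵥ s)
    nlinarith

lemma lower_open
    (n r : ℕ)
    (Cx : Set (Fin n → ℝ)) (hCxo : IsOpen Cx)
    (Cθ : Set ((Fin n → ℝ) × (Fin n → ℝ)))
    (hCθo : IsOpen Cθ)
    (lam : Fin r → ℝ) (hneg : ∀ i, lam i < 0)
    (hinv : ∀ i : Fin r, ∀ θ ∈ closure Cθ,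
      IsUnit (Acan n θ.1 - lam i • (1 : Matrix (Fin n) (Fin n) ℝ)).det)
    (LT : ℝ) (w : Fin r → ℝ)
    (hinj : ∀ x ∈ closure Cx, ∀ x' ∈ closure Cx, ∀ θ ∈ closure Cθ, ∀ θ' ∈ closure Cθ,
        eNorm (Tcan n r lam x θ.1 θ.2 w - Tcan n r lam x' θ'.1 θ'.2 w)
          ≥ LT * Real.sqrt (∑ i, (x i - x' i) ^ 2
              + (∑ j, (θ.1 j - θ'.1 j) ^ 2 + ∑ j, (θ.2 j - θ'.2 j) ^ 2)))
    (q : ℝ) (hq : 0 < q) (hqb : ∀ i, ∀ θ ∈ closure Cθ, q ≤ |qf n (lam i) θ.1|)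
    (x : Fin n → ℝ) (hx : x ∈ Cx) (θ : (Fin n → ℝ) × (Fin n → ℝ)) (hθ : θ ∈ Cθ)
    (d : Fin (3 * n) → ℝ) :
    q * LT * eNorm d ≤ eNorm (Pmat n r lam (Tcan n r lam x θ.1 θ.2 w) w *ᵥ d) := by
  obtain ⟨a, b, c, rfl⟩ := stack3_surj n d
  obtain ⟨t, ht, hxt, hθt⟩ : ∃ t : ℝ, 0 < t ∧ x + t • a ∈ Cx ∧ θ + t • (b, c) ∈ Cθ := by
    have h1 : ∀ᶠ t : ℝ in nhds 0, x + t • a ∈ Cx := by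
      have : Continuous fun t : ℝ => x + t • a := by fun_prop
      exact this.continuousAt.eventually_mem (hCxo.mem_nhds (by simpa using hx))
    have h2 : ∀ᶠ t : ℝ in nhds 0, θ + t • (b, c) ∈ Cθ := by
      have : Continuous fun t : ℝ => θ + t • (b, c) := by fun_prop
      exact this.continuousAt.eventually_mem (hCθo.mem_nhds (by simpa using hθ))
    have h3 := ((h1.and h2).filter_mono nhdsWithin_le_nhds).and
      (self_mem_nhdsWithin : Set.Ioi (0 : ℝ) ∈ nhdsWithin 0 (Set.Ioi 0))
    obtain ⟨t, ⟨h, h'⟩, ht⟩ := h3.exists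
    exact ⟨t, ht, h, h'⟩
  set T := Tcan n r lam x θ.1 θ.2 w with hT
  set T' := Tcan n r lam (x + t • a) (θ + t • (b, c)).1 (θ + t • (b, c)).2 w with hT'
  have key : ∀ i, t * (Pmat n r lam T w *ᵥ stack3 n a b c) i
      = qf n (lam i) (θ + t • (b, c)).1 * (T' i - T i) := by
    intro i
    have e1 := T_rel n r lam i (hneg i).ne x θ.1 θ.2 w T (hinv i θ (subset_closure hθ))
    have e2 := T_rel n r lam i (hneg i).ne (x + t • a) (θ + t • (b, c)).1
      (θ + t • (b, c)).2 w T (hinv i _ (subset_closure hθt))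
    have e3 : stack3 n (x + t • a) (θ + t • (b, c)).1 (θ + t • (b, c)).2
        = stack3 n x θ.1 θ.2 + t • stack3 n a b c := stack3_lin n t _ _ _ _ _ _
    rw [e3, Matrix.mulVec_add, Matrix.mulVec_smul] at e2
    simp only [Pi.add_apply, Pi.smul_apply, smul_eq_mul] at e2
    rw [← hT] at e1
    rw [← hT'] at e2
    linear_combination e2 - e1
  have h1 := hinj _ (subset_closure hxt) _ (subset_closure hx) _ (subset_closure hθt) _
    (subset_closure hθ)
  rw [← hT, ← hT'] at h1
  have h2 : Real.sqrt (∑ i, ((x + t • a) i - x i) ^ 2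
              + (∑ j, ((θ + t • (b, c)).1 j - θ.1 j) ^ 2
                + ∑ j, ((θ + t • (b, c)).2 j - θ.2 j) ^ 2)) = t * eNorm (stack3 n a b c) := by
    rw [← abs_of_pos ht, ← eNorm_smul, abs_of_pos ht]
    have := stack3_lin n t 0 0 0 a b c
    have h0 : stack3 n 0 0 0 = 0 := by
      funext j; simp only [stack3]; split_ifs <;> rfl
    simp only [h0, zero_add] at this
    rw [← this, eNorm_stack3]
    simp
  rw [h2] at h1
  have h3 : eNorm (T' - T) ≤ q⁻¹ * eNorm (t • (Pmat n r lam T w *ᵥ stack3 n a b c)) := by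
    refine eNorm_le_mul _ (by positivity) _ _ fun i => ?_
    rw [Pi.smul_apply, smul_eq_mul, key, abs_mul, Pi.sub_apply]
    have := hqb i _ (subset_closure hθt)
    rw [← mul_assoc]
    refine le_mul_of_one_le_left (abs_nonneg _) ?_
    rw [inv_mul_eq_div, one_le_div hq]
    exact this
  rw [eNorm_smul, abs_of_pos ht, inv_mul_eq_div, le_div_iff₀ hq] at h3
  have h4 : t * (q * LT * eNorm (stack3 n a b c))
      ≤ t * eNorm (Pmat n r lam T w *ᵥ stack3 n a b c) := by
    nlinarith
  exact le_of_mul_le_mul_left h4 ht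

set_option maxHeartbeats 400000 in
/-- Proposition 5, explicit left inverse `T*`. -/
theorem explicit_left_inverse
    (n r : ℕ) (hn : 0 < n)
    (Cx : Set (Fin n → ℝ)) (hCxo : IsOpen Cx) (hCxb : Bornology.IsBounded Cx)
    (Cθ : Set ((Fin n → ℝ) × (Fin n → ℝ)))
    (hCθo : IsOpen Cθ) (hCθb : Bornology.IsBounded Cθ)
    (Cw : Set (Fin r → ℝ)) (hCwo : IsOpen Cw) (hCwb : Bornology.IsBounded Cw)
    (lam : Fin r → ℝ) (hneg : ∀ i, lam i < 0)
    (hinv : ∀ i : Fin r, ∀ θ ∈ closure Cθ,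
      IsUnit (Acan n θ.1 - lam i • (1 : Matrix (Fin n) (Fin n) ℝ)).det)
    (LT : ℝ) (hLT : 0 < LT)
    (hinj : ∀ x ∈ closure Cx, ∀ x' ∈ closure Cx, ∀ θ ∈ closure Cθ, ∀ θ' ∈ closure Cθ,
        ∀ w ∈ closure Cw,
        eNorm (Tcan n r lam x θ.1 θ.2 w - Tcan n r lam x' θ'.1 θ'.2 w)
          ≥ LT * Real.sqrt (∑ i, (x i - x' i) ^ 2
              + (∑ j, (θ.1 j - θ'.1 j) ^ 2 + ∑ j, (θ.2 j - θ'.2 j) ^ 2))) :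
    ∃ pmin > (0 : ℝ), ∃ εT > (0 : ℝ), ∃ LTstar > (0 : ℝ),
      ∀ x ∈ closure Cx, ∀ θ ∈ closure Cθ, ∀ w ∈ closure Cw, ∀ z : Fin r → ℝ,
        eNorm (z - Tcan n r lam x θ.1 θ.2 w) ≤ εT →
        eNorm (TstarExpl n r lam pmin z w - stack3 n x θ.1 θ.2)
          ≤ LTstar * eNorm (z - Tcan n r lam x θ.1 θ.2 w) := by
  have hKx : IsCompact (closure Cθ) := hCθb.isCompact_closure
  have hqc : ∀ i, Continuous fun θ : (Fin n → ℝ) × (Fin n → ℝ) => qf n (lam i) θ.1 := by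
    intro i; unfold qf dotProduct; fun_prop
  have hq0 : ∀ i, ∀ θ ∈ closure Cθ, qf n (lam i) θ.1 ≠ 0 := fun i θ hθ =>
    qf_ne n hn _ (hneg i).ne _ (hinv i θ hθ)
  have hlow : ∀ i, ∃ q : ℝ, 0 < q ∧ ∀ θ ∈ closure Cθ, q ≤ |qf n (lam i) θ.1| := fun i =>
    hKx.exists_forall_le' (hqc i).abs.continuousOn fun θ hθ => abs_pos.2 (hq0 i θ hθ)
  have hup : ∀ i, ∃ Q : ℝ, ∀ θ ∈ closure Cθ, |qf n (lam i) θ.1| ≤ Q := fun i => by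
    obtain ⟨Q, hQ⟩ := hKx.exists_bound_of_continuousOn (hqc i).continuousOn
    exact ⟨Q, hQ⟩
  obtain ⟨q, hq, hqb⟩ : ∃ q : ℝ, 0 < q ∧ ∀ i, ∀ θ ∈ closure Cθ, q ≤ |qf n (lam i) θ.1| := by
    choose f hf hf' using hlow
    rcases isEmpty_or_nonempty (Fin r) with h | h
    · exact ⟨1, one_pos, fun i => h.elim i⟩
    · obtain ⟨i0, hi0⟩ := Finite.exists_min f
      exact ⟨f i0, hf i0, fun i θ hθ => (hi0 i).trans (hf' i θ hθ)⟩
  obtain ⟨Q, hQ, hQb⟩ : ∃ Q : ℝ, 0 < Q ∧ ∀ i, ∀ θ ∈ closure Cθ, |qf n (lam i) θ.1| ≤ Q := by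
    choose f hf using hup
    obtain ⟨M, hM⟩ := Finite.exists_le f
    exact ⟨max M 1, by positivity, fun i θ hθ =>
      (hf i θ hθ).trans ((hM i).trans (le_max_left _ _))⟩
  obtain ⟨K, hK, hKb⟩ : ∃ K : ℝ, 0 < K ∧ ∀ i, eNorm (Vlam n (lam i)) ≤ K := by
    obtain ⟨M, hM⟩ := Finite.exists_le fun i => eNorm (Vlam n (lam i))
    exact ⟨max M 1, by positivity, fun i => (hM i).trans (le_max_left _ _)⟩
  set c := q * LT with hc
  have hcpos : 0 < c := by positivity
  -- lower bound on the closure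
  have hlb : ∀ x ∈ closure Cx, ∀ θ ∈ closure Cθ, ∀ w ∈ closure Cw, ∀ d,
      c * eNorm d ≤ eNorm (Pmat n r lam (Tcan n r lam x θ.1 θ.2 w) w *ᵥ d) := by
    intro x hx θ hθ w hw d
    have hmem : (x, θ) ∈ closure (Cx ×ˢ Cθ) := by
      rw [closure_prod_eq]; exact ⟨hx, hθ⟩
    have hTc : ContinuousOn (fun p : (Fin n → ℝ) × ((Fin n → ℝ) × (Fin n → ℝ)) =>
        Tcan n r lam p.1 p.2.1 p.2.2 w) (closure (Cx ×ˢ Cθ)) := by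
      rw [continuousOn_pi]
      intro i
      have hc1 : ContinuousOn (fun p : (Fin n → ℝ) × ((Fin n → ℝ) × (Fin n → ℝ)) =>
          (Vlam n (lam i) ⬝ᵥ (p.1 - w i • p.2.2)) / qf n (lam i) p.2.1)
          (closure (Cx ×ˢ Cθ)) := by
        refine ContinuousOn.div (Continuous.continuousOn ?_)
          ((hqc i).comp continuous_snd).continuousOn ?_
        · simp only [dotProduct, Pi.sub_apply, Pi.smul_apply]; fun_prop
        · rintro ⟨x, θ⟩ hp
          rw [closure_prod_eq] at hp
          exact hq0 i θ hp.2
      refine hc1.congr ?_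
      rintro ⟨x, θ⟩ hp
      rw [closure_prod_eq] at hp
      have := qf_mul_T n r lam i (hneg i).ne x θ.1 θ.2 w (hinv i θ hp.2)
      simp only
      rw [eq_div_iff (hq0 i θ hp.2), ← this, mul_comm]
    obtain ⟨a, b, e, rfl⟩ := stack3_surj n d
    have hcP : Continuous fun z : Fin r → ℝ => eNorm (Pmat n r lam z w *ᵥ stack3 n a b e) := by
      refine continuous_eNorm.comp (continuous_pi fun i => ?_)
      simp only [Pmat_mul]
      fun_prop
    have hg := hcP.comp_continuousOn hTc
    have hf : ContinuousOn (fun _ : (Fin n → ℝ) × ((Fin n → ℝ) × (Fin n → ℝ)) =>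
      c * eNorm (stack3 n a b e)) (closure (Cx ×ˢ Cθ)) := continuousOn_const
    have hopen : ∀ p ∈ Cx ×ˢ Cθ, c * eNorm (stack3 n a b e) ≤
        eNorm (Pmat n r lam (Tcan n r lam p.1 p.2.1 p.2.2 w) w *ᵥ stack3 n a b e) := by
      rintro ⟨x, θ⟩ ⟨hx, hθ⟩
      exact lower_open n r Cx hCxo Cθ hCθo lam hneg hinv LT w
        (fun x hx x' hx' θ hθ θ' hθ' => hinj x hx x' hx' θ hθ θ' hθ' w hw) q hq hqb x hx θ hθ _
    have hfin := le_on_closure hopen hf hg hmem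
    exact hfin
  refine ⟨(c / 2) ^ 2, by positivity, c / (2 * K), by positivity, Q / (c / 2), by positivity, ?_⟩
  intro x hx θ hθ w hw z hz
  set T := Tcan n r lam x θ.1 θ.2 w with hT
  have hP : ∀ d, c / 2 * eNorm d ≤ eNorm (Pmat n r lam z w *ᵥ d) := by
    intro d
    have h1 := hlb x hx θ hθ w hw d
    rw [← hT] at h1
    have h2 : eNorm (Pmat n r lam T w *ᵥ d - Pmat n r lam z w *ᵥ d)
        ≤ (K * eNorm d) * eNorm (z - T) := by
      refine eNorm_le_mul _ (mul_nonneg hK.le (eNorm_nonneg _)) _ _ fun i => ?_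
      obtain ⟨a, b, e, rfl⟩ := stack3_surj n d
      have h3 : (Pmat n r lam T w *ᵥ stack3 n a b e - Pmat n r lam z w *ᵥ stack3 n a b e) i
          = - ((Vlam n (lam i) ⬝ᵥ b) * (z - T) i) := by
        simp only [Pi.sub_apply, Pmat_mul]; ring
      rw [h3, abs_neg, abs_mul]
      refine mul_le_mul_of_nonneg_right ?_ (abs_nonneg _)
      refine (abs_dot_le_eNorm _ _).trans
        (mul_le_mul (hKb i) ?_ (eNorm_nonneg _) hK.le)
      rw [eNorm_stack3, eNorm]
      refine Real.sqrt_le_sqrt ?_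
      have : 0 ≤ ∑ i, a i ^ 2 := Finset.sum_nonneg fun _ _ => sq_nonneg _
      have : 0 ≤ ∑ i, e i ^ 2 := Finset.sum_nonneg fun _ _ => sq_nonneg _
      linarith
    have h3 := eNorm_add_le (Pmat n r lam T w *ᵥ d - Pmat n r lam z w *ᵥ d)
      (Pmat n r lam z w *ᵥ d)
    rw [sub_add_cancel] at h3
    have h4 : (K * eNorm d) * eNorm (z - T) ≤ (K * eNorm d) * (c / (2 * K)) :=
      mul_le_mul_of_nonneg_left hz (mul_nonneg hK.le (eNorm_nonneg _))
    have h5 : (K * eNorm d) * (c / (2 * K)) = c / 2 * eNorm d := by field_simp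
    linarith
  obtain ⟨hpsd, hest⟩ := lsq (3 * n) r (Pmat n r lam z w) (c / 2) (by positivity) hP z
    (stack3 n x θ.1 θ.2)
  rw [TstarExpl, if_pos hpsd]
  have hres : eNorm (z - Pmat n r lam z w *ᵥ stack3 n x θ.1 θ.2) ≤ Q * eNorm (z - T) := by
    refine eNorm_le_mul _ hQ.le _ _ fun i => ?_
    rw [Pi.sub_apply, T_rel n r lam i (hneg i).ne x θ.1 θ.2 w z (hinv i θ hθ), sub_sub_cancel,
      abs_mul]
    exact mul_le_mul_of_nonneg_right (hQb i θ hθ) (abs_nonneg _)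
  rw [div_mul_eq_mul_div, le_div_iff₀ (by positivity), mul_comm]
  exact hest.trans hres
end
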